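/- Let H = {rrb, rby} (the patterns: a triangle with two red edges and one blue edge, and a rainbow triangle with one edge of each color). Then h_2(n, H) = Θ(√n): for every positive integer n we have h_2(n, H) ≥ ⌈√n⌉, and there exist a constant C > 0 and an integer n0 such that h_2(n, H) ≤ C·√n for all n ≥ n0. -/

import Mathlib

/-- The three edge colors: red, blue, yellow. -/
inductive Col : Type
  | r | b | y
  deriving DecidableEq

/-- A (symmetric) 3-edge-coloring of the complete graph `K_n` on vertex set `Fin n`. -/
structure Coloring (n : ℕ) where
  col : Fin n → Fin n → Col
  symm : ∀ i j, col i j = col j i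

/-- The pattern (multiset of edge colors) of the triangle on vertices `u, v, w`. -/
def triPattern {n : ℕ} (c : Coloring n) (u v w : Fin n) : Multiset Col :=
  {c.col u v, c.col v w, c.col u w}

/-- The coloring `c` contains the pattern `P`: some triangle has color multiset `P`. -/
def Contains {n : ℕ} (c : Coloring n) (P : Multiset Col) : Prop :=
  ∃ u v w : Fin n, u ≠ v ∧ v ≠ w ∧ u ≠ w ∧ triPattern c u v w = P

/-- The coloring `c` avoids every pattern in the family `H`. -/
def Avoids {n : ℕ} (c : Coloring n) (H : Set (Multiset Col)) : Prop :=
  ∀ P ∈ H, ¬ Contains c P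

/-- A vertex set `S` is two-colored under `c`: the edges inside `S` use at most
two of the three colors, i.e. some color is missing on the edges inside `S`. -/
def TwoColored {n : ℕ} (c : Coloring n) (S : Finset (Fin n)) : Prop :=
  ∃ x : Col, ∀ i ∈ S, ∀ j ∈ S, i ≠ j → c.col i j ≠ x

/-- `h2 c` is the maximum size of a vertex set whose induced edges use at most
two of the three colors. -/
noncomputable def h2 {n : ℕ} (c : Coloring n) : ℕ :=
  sSup {k | ∃ S : Finset (Fin n), TwoColored c S ∧ S.card = k}

/-- `h2n n H = min { h2 c : c a 3-edge-coloring of K_n avoiding all patterns in H }`. -/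
noncomputable def h2n (n : ℕ) (H : Set (Multiset Col)) : ℕ :=
  sInf {m | ∃ c : Coloring n, Avoids c H ∧ h2 c = m}

/-- Pattern abbreviations. -/
def Prrr : Multiset Col := {Col.r, Col.r, Col.r}
def Pbbb : Multiset Col := {Col.b, Col.b, Col.b}
def Pyyy : Multiset Col := {Col.y, Col.y, Col.y}
def Prrb : Multiset Col := {Col.r, Col.r, Col.b}
def Prry : Multiset Col := {Col.r, Col.r, Col.y}
def Pbbr : Multiset Col := {Col.b, Col.b, Col.r}
def Pbby : Multiset Col := {Col.b, Col.b, Col.y}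
def Pyyr : Multiset Col := {Col.y, Col.y, Col.r}
def Pyyb : Multiset Col := {Col.y, Col.y, Col.b}
def Prby : Multiset Col := {Col.r, Col.b, Col.y}

/-!
Avoiding `rrb` and `rby` means that blue adjacency propagates along red edges, so no red component
contains a blue edge. One vertex from each red component gives a set without red edges, and hence
`n` is at most the number of components times the largest component size, that is `h2 c ^ 2`.

For the upper bound, let `G` be a random graph on `m` vertices with edge probability `m ^ (-1 / 4)`;
with positive probability it has no clique on nine vertices and no independent set on more than
`9 * √m` vertices. Color the `m × m` grid yellow along the lexicographic product of `G` with itself,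
the remaining edges red inside the rows and blue between them: blue edges leave a row and red edges
stay inside one, so blue adjacency propagates along red edges. Sets missing one color are controlled
by the clique and independence numbers of both factors: they have at most `8 * m` vertices without
red or without blue, and at most `(9 * √m) ^ 2` without yellow.
-/

section RandomGraph

open MeasureTheory ProbabilityTheory unitInterval SimpleGraph
open scoped Finset

theorem setBernoulli_setOf_subset {ι : Type*} {u : Set ι} {T : Finset ι} (hT : (T : Set ι) ⊆ u)
    (p : I) : setBer(u, p) {s | (T : Set ι) ⊆ s} = (toNNReal p : ENNReal) ^ #T := by
  have h_pi : (fun f : ι → Prop ↦ {i | f i}) ⁻¹' {s | (T : Set ι) ⊆ s} =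
      Set.pi T fun _ ↦ {True} := by
    ext f
    simp [Set.subset_def, Set.mem_pi]
  rw [setBernoulli_apply', h_pi, Measure.infinitePi_pi _ fun _ _ ↦ .of_discrete]
  refine Finset.prod_eq_pow_card fun i hi ↦ ?_
  simp [hT hi]

variable {V : Type*}

theorem isClique_iff_image_offDiag_subset [DecidableEq V] {G : SimpleGraph V} {S : Finset V} :
    G.IsClique S ↔ (S.offDiag.image Sym2.mk.uncurry : Set (Sym2 V)) ⊆ G.edgeSet := by
  rw [Finset.coe_image, Set.image_subset_iff, isClique_iff]
  simp only [Set.Pairwise, Set.subset_def, Finset.mem_coe, Finset.mem_offDiag, Set.mem_preimage,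
    Prod.forall, Function.uncurry_apply_pair, mem_edgeSet]
  grind

theorem measurableSet_setOf_isClique [Countable V] (S : Set V) :
    MeasurableSet {G : SimpleGraph V | G.IsClique S} := by
  simp only [isClique_iff, Set.Pairwise]
  measurability

theorem binomialRandom_setOf_isClique [Countable V] (p : I) (S : Finset V) :
    G(V, p) {G | G.IsClique S} = (toNNReal p : ENNReal) ^ (#S).choose 2 := by
  classical
  have h_diag : (S.offDiag.image Sym2.mk.uncurry : Set (Sym2 V)) ⊆ Sym2.diagSetᶜ := by
    rw [← edgeSet_top, ← isClique_iff_image_offDiag_subset]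
    exact fun _ _ _ _ h ↦ h
  have h_preimage : fromEdgeSet ⁻¹' {G : SimpleGraph V | G.IsClique S} =
      {E | (S.offDiag.image Sym2.mk.uncurry : Set (Sym2 V)) ⊆ E} := by
    ext E
    rw [Set.mem_preimage, Set.mem_ofPred_eq, isClique_iff_image_offDiag_subset, edgeSet_fromEdgeSet]
    grind
  rw [binomialRandom_eq_map,
    Measure.map_apply measurable_fromEdgeSet (measurableSet_setOf_isClique _), h_preimage,
    setBernoulli_setOf_subset h_diag, Sym2.card_image_offDiag]

theorem edgeSet_compl (G : SimpleGraph V) : Gᶜ.edgeSet = Sym2.diagSetᶜ \ G.edgeSet := by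
  ext ⟨u, v⟩
  simp

theorem ncard_edgeSet_add_ncard_edgeSet_compl [Finite V] (G : SimpleGraph V) :
    G.edgeSet.ncard + Gᶜ.edgeSet.ncard = (Nat.card V).choose 2 := by
  classical
  have := Fintype.ofFinite V
  rw [edgeSet_compl, add_comm, Set.ncard_sdiff_add_ncard_of_subset G.edgeSet_subset_compl_diagSet,
    Nat.card_eq_fintype_card, ← Sym2.card_diagSet_compl, Fintype.card_eq_nat_card,
    Nat.card_coe_set_eq]

theorem measurable_compl_simpleGraph : Measurable (compl : SimpleGraph V → SimpleGraph V) := by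
  simp only [measurable_iff_adj, compl_adj]
  fun_prop

theorem measurableSet_singleton_simpleGraph [Countable V] (G : SimpleGraph V) :
    MeasurableSet {G} := by
  rw [← edgeSet_injective.preimage_image {G}, Set.image_singleton]
  exact measurable_edgeSet (.singleton _)

theorem map_compl_binomialRandom [Finite V] (p : I) : G(V, p).map compl = G(V, σ p) := by
  have : MeasurableSingletonClass (SimpleGraph V) := ⟨measurableSet_singleton_simpleGraph⟩
  refine Measure.ext_of_singleton fun G ↦ ?_
  have h_preimage : compl ⁻¹' {G} = {Gᶜ} := by
    rw [Set.preimage_compl_eq_image_compl, Set.image_singleton]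
  rw [Measure.map_apply measurable_compl_simpleGraph (.singleton G), h_preimage,
    binomialRandom_singleton, binomialRandom_singleton, symm_symm,
    ← ncard_edgeSet_add_ncard_edgeSet_compl G, Nat.add_sub_cancel_left, Nat.add_sub_cancel,
    mul_comm]

variable [Fintype V]

theorem binomialRandom_real_setOf_le_cliqueNum_le (p : I) (s : ℕ) :
    G(V, p).real {G | s ≤ G.cliqueNum} ≤ (Fintype.card V).choose s * (p : ℝ) ^ s.choose 2 := by
  have h_subset : {G : SimpleGraph V | s ≤ G.cliqueNum} ⊆
      ⋃ S ∈ (Finset.univ : Finset V).powersetCard s, {G | G.IsClique S} := by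
    intro G hG
    obtain ⟨K, hK⟩ := G.exists_isNClique_cliqueNum
    obtain ⟨S, hSK, hS⟩ := Finset.exists_subset_card_eq (hG.trans_eq hK.card_eq.symm)
    exact Set.mem_biUnion (Finset.mem_powersetCard_univ.mpr hS) (hK.isClique.subset hSK)
  calc G(V, p).real {G | s ≤ G.cliqueNum}
      ≤ ∑ S ∈ (Finset.univ : Finset V).powersetCard s, G(V, p).real {G | G.IsClique S} :=
        (measureReal_mono h_subset (measure_ne_top _ _)).trans (measureReal_biUnion_finset_le _ _)
    _ = ∑ _ ∈ (Finset.univ : Finset V).powersetCard s, (p : ℝ) ^ s.choose 2 := by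
        refine Finset.sum_congr rfl fun S hS ↦ ?_
        rw [measureReal_def, binomialRandom_setOf_isClique, (Finset.mem_powersetCard.mp hS).2]
        simp
    _ = (Fintype.card V).choose s * (p : ℝ) ^ s.choose 2 := by simp

theorem binomialRandom_real_setOf_le_indepNum_le (p : I) (t : ℕ) :
    G(V, p).real {G | t ≤ G.indepNum} ≤
      (Fintype.card V).choose t * (1 - p : ℝ) ^ t.choose 2 := by
  have : MeasurableSingletonClass (SimpleGraph V) := ⟨measurableSet_singleton_simpleGraph⟩
  have h_compl : G(V, p).real {G | t ≤ G.indepNum} = G(V, σ p).real {G | t ≤ G.cliqueNum} := by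
    rw [← map_compl_binomialRandom, map_measureReal_apply measurable_compl_simpleGraph .of_discrete]
    simp
  rw [h_compl, ← coe_symm_eq]
  exact binomialRandom_real_setOf_le_cliqueNum_le (σ p) t

theorem exists_cliqueNum_lt_and_indepNum_lt (p : I) {s t : ℕ}
    (h : (Fintype.card V).choose s * (p : ℝ) ^ s.choose 2 +
      (Fintype.card V).choose t * (1 - p : ℝ) ^ t.choose 2 < 1) :
    ∃ G : SimpleGraph V, G.cliqueNum < s ∧ G.indepNum < t := by
  by_contra! h_none
  have h_univ : {G : SimpleGraph V | s ≤ G.cliqueNum} ∪ {G | t ≤ G.indepNum} = Set.univ :=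
    Set.eq_univ_of_forall fun G ↦ or_iff_not_imp_left.mpr fun hG ↦ h_none G (not_le.mp hG)
  refine h.not_ge ?_
  calc (1 : ℝ) = G(V, p).real ({G | s ≤ G.cliqueNum} ∪ {G | t ≤ G.indepNum}) := by
        rw [h_univ, probReal_univ]
    _ ≤ G(V, p).real {G | s ≤ G.cliqueNum} + G(V, p).real {G | t ≤ G.indepNum} :=
        measureReal_union_le _ _
    _ ≤ _ := add_le_add (binomialRandom_real_setOf_le_cliqueNum_le p s)
        (binomialRandom_real_setOf_le_indepNum_le p t)

end RandomGraph

section RamseyGraph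

open SimpleGraph

theorem choose_nine_mul_inv_pow_lt {m : ℕ} {x : ℝ} (hx : 0 < x) (hm : m ≤ x ^ 4) :
    m.choose 9 * x⁻¹ ^ Nat.choose 9 2 < 1 / 2 := by
  calc m.choose 9 * x⁻¹ ^ Nat.choose 9 2
      ≤ (x ^ 4) ^ 9 / (Nat.factorial 9) * x⁻¹ ^ 36 := by
        gcongr ?_ * _
        exact (Nat.choose_le_pow_div 9 m).trans (by gcongr)
    _ = 1 / Nat.factorial 9 := by field_simp
    _ < 1 / 2 := by norm_num [Nat.factorial]

theorem choose_mul_one_sub_inv_pow_lt {m t : ℕ} {x : ℝ} (hx : 1 ≤ x) (hm : m ≤ x ^ 4)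
    (ht : 8 * x ^ 2 + 1 ≤ t) : m.choose t * (1 - x⁻¹) ^ t.choose 2 < 1 / 2 := by
  have hx0 : 0 < x := one_pos.trans_le hx
  have h_base : (m : ℝ) ≤ Real.exp (4 * (x - 1)) :=
    calc (m : ℝ) ≤ x ^ 4 := hm
      _ ≤ Real.exp (x - 1) ^ 4 := by gcongr; linarith [Real.add_one_le_exp (x - 1)]
      _ = Real.exp (4 * (x - 1)) := by rw [← Real.exp_nat_mul]; norm_num
  have h_exponent : x⁻¹ * t.choose 2 ≥ 4 * x * t := by
    rw [Nat.cast_choose_two, ge_iff_le, inv_mul_eq_div, le_div_iff₀ hx0]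
    nlinarith
  calc m.choose t * (1 - x⁻¹) ^ t.choose 2
      ≤ Real.exp (4 * (x - 1)) ^ t * Real.exp (-x⁻¹) ^ t.choose 2 := by
        have h_nonneg : 0 ≤ 1 - x⁻¹ := sub_nonneg.mpr (inv_le_one_of_one_le₀ hx)
        have h_choose : (m.choose t : ℝ) ≤ (m : ℝ) ^ t := mod_cast Nat.choose_le_pow m t
        gcongr
        · exact h_choose.trans (by gcongr)
        · exact Real.one_sub_le_exp_neg _
    _ = Real.exp (4 * (x - 1) * t - x⁻¹ * t.choose 2) := by
        rw [← Real.exp_nat_mul, ← Real.exp_nat_mul, ← Real.exp_add]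
        ring_nf
    _ ≤ Real.exp (-1) := by
        gcongr
        nlinarith
    _ < 1 / 2 := Real.exp_neg_one_lt_half

theorem exists_cliqueNum_le_eight_and_indepNum_le (V : Type*) [Fintype V] [Nonempty V] :
    ∃ G : SimpleGraph V, G.cliqueNum ≤ 8 ∧ (G.indepNum : ℝ) ≤ 9 * √(Fintype.card V) := by
  set x : ℝ := √(√(Fintype.card V)) with hx_def
  have hx : 1 ≤ x := by simp [hx_def, Nat.one_le_iff_ne_zero]
  have hx_sq : x ^ 2 = √(Fintype.card V) := Real.sq_sqrt (Real.sqrt_nonneg _)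
  have hx_four : Fintype.card V = x ^ 4 := by
    rw [show x ^ 4 = (x ^ 2) ^ 2 by ring, hx_sq, Real.sq_sqrt (Nat.cast_nonneg _)]
  set t := ⌊9 * x ^ 2⌋₊ + 1 with ht_def
  have ht : 8 * x ^ 2 + 1 ≤ t := by
    have := Nat.lt_floor_add_one (9 * x ^ 2)
    push_cast [ht_def]
    nlinarith
  obtain ⟨G, hG_clique, hG_indep⟩ := exists_cliqueNum_lt_and_indepNum_lt (V := V)
    ⟨x⁻¹, by positivity, inv_le_one_of_one_le₀ hx⟩ (s := 9) (t := t) <| by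
      linarith [choose_nine_mul_inv_pow_lt (one_pos.trans_le hx) hx_four.le,
        choose_mul_one_sub_inv_pow_lt hx hx_four.le ht]
  refine ⟨G, Nat.le_of_lt_succ hG_clique, ?_⟩
  rw [← hx_sq]
  exact (Nat.le_floor_iff (by positivity)).mp (Nat.le_of_lt_succ hG_indep)

end RamseyGraph

section LexicographicProduct

open SimpleGraph
open scoped Finset

variable {V W : Type*}

/-- The lexicographic product of two graphs, with `K` between the blocks and `L` inside each
block. -/
def lexProd (K : SimpleGraph V) (L : SimpleGraph W) : SimpleGraph (V × W) where
  Adj p q := K.Adj p.1 q.1 ∨ p.1 = q.1 ∧ L.Adj p.2 q.2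
  symm := ⟨fun _ _ ↦ Or.imp Adj.symm (And.imp Eq.symm Adj.symm)⟩
  loopless := ⟨fun _ ↦ by simp⟩

theorem cliqueNum_lexProd_le [Finite V] [Finite W] (K : SimpleGraph V) (L : SimpleGraph W) :
    (lexProd K L).cliqueNum ≤ K.cliqueNum * L.cliqueNum := by
  classical
  obtain ⟨S, hS⟩ := (lexProd K L).exists_isNClique_cliqueNum
  have h_blocks : K.IsClique (S.image Prod.fst : Finset V) := by
    intro v hv v' hv' hne
    obtain ⟨p, hp, rfl⟩ := Finset.mem_image.mp hv
    obtain ⟨q, hq, rfl⟩ := Finset.mem_image.mp hv'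
    exact (hS.isClique hp hq (ne_of_apply_ne _ hne)).resolve_right fun h ↦ hne h.1
  have h_block (v : V) : L.IsClique ({p ∈ S | p.1 = v}.image Prod.snd : Finset W) := by
    intro w hw w' hw' hne
    simp only [Finset.coe_image, Finset.coe_filter, Set.mem_image] at hw hw'
    obtain ⟨p, ⟨hp, rfl⟩, rfl⟩ := hw
    obtain ⟨q, ⟨hq, hpq⟩, rfl⟩ := hw'
    have := hS.isClique hp hq (ne_of_apply_ne _ hne)
    simp_all [lexProd]
  have h_card (v : V) : #{p ∈ S | p.1 = v} ≤ L.cliqueNum := by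
    have h_injOn : Set.InjOn (Prod.snd : V × W → W) ({p ∈ S | p.1 = v} : Finset (V × W)) := by
      intro p hp q hq h
      simp_all [Prod.ext_iff]
    rw [← Finset.card_image_of_injOn h_injOn]
    exact (h_block v).card_le_cliqueNum
  calc (lexProd K L).cliqueNum = #S := hS.card_eq.symm
    _ ≤ L.cliqueNum * #(S.image Prod.fst) :=
        Finset.card_le_mul_card_image S _ fun v _ ↦ h_card v
    _ ≤ K.cliqueNum * L.cliqueNum := by
        rw [mul_comm]
        gcongr
        exact h_blocks.card_le_cliqueNum

theorem cliqueNum_comap_le [Finite V] [Finite W] (G : SimpleGraph W) (φ : V ↪ W) :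
    (G.comap φ).cliqueNum ≤ G.cliqueNum := by
  obtain ⟨S, hS⟩ := (G.comap φ).exists_isNClique_cliqueNum
  have h_map : G.IsClique (S.map φ : Finset W) := by
    rw [Finset.coe_map]
    rintro _ ⟨u, hu, rfl⟩ _ ⟨v, hv, rfl⟩ hne
    exact hS.isClique hu hv (ne_of_apply_ne _ hne)
  rw [← hS.card_eq, ← S.card_map φ]
  exact h_map.card_le_cliqueNum

theorem cliqueNum_top_le [Fintype V] : (⊤ : SimpleGraph V).cliqueNum ≤ Fintype.card V := by
  obtain ⟨S, hS⟩ := (⊤ : SimpleGraph V).exists_isNClique_cliqueNum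
  exact hS.card_eq ▸ S.card_le_univ

end LexicographicProduct

section Propagation

open SimpleGraph
open scoped Finset

variable {V : Type*} {R B : SimpleGraph V}

theorem adj_of_adj_of_reachable (h : ∀ u v w, B.Adj u v → R.Adj v w → B.Adj u w) {u v w : V}
    (huv : B.Adj u v) (hvw : R.Reachable v w) : B.Adj u w := by
  obtain ⟨p⟩ := hvw
  induction p with
  | nil => exact huv
  | cons hvx _ ih => exact ih (h _ _ _ huv hvx)

theorem isIndepSet_supp_connectedComponent (h : ∀ u v w, B.Adj u v → R.Adj v w → B.Adj u w)
    (C : R.ConnectedComponent) : B.IsIndepSet C.supp := fun _ hu _ hv _ huv ↦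
  B.irrefl (adj_of_adj_of_reachable h huv (ConnectedComponent.exact (hv.trans hu.symm)))

theorem card_connectedComponent_le_indepNum [Finite V] (R : SimpleGraph V) :
    Nat.card R.ConnectedComponent ≤ R.indepNum := by
  classical
  have := Fintype.ofFinite V
  have h_mk (C : R.ConnectedComponent) : R.connectedComponentMk C.out = C := Quot.out_eq C
  have h_inj : Function.Injective fun C : R.ConnectedComponent ↦ C.out :=
    Function.LeftInverse.injective h_mk
  have h_indep : R.IsIndepSet (Finset.univ.image fun C : R.ConnectedComponent ↦ C.out) := by
    rw [Finset.coe_image]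
    rintro _ ⟨C, -, rfl⟩ _ ⟨D, -, rfl⟩ hne hadj
    refine hne (congrArg _ ?_)
    rw [← h_mk C, ← h_mk D]
    exact ConnectedComponent.sound hadj.reachable
  rw [Nat.card_eq_fintype_card, ← Finset.card_univ, ← Finset.card_image_of_injective _ h_inj]
  exact h_indep.card_le_indepNum

theorem card_le_indepNum_mul_indepNum [Fintype V]
    (h : ∀ u v w, B.Adj u v → R.Adj v w → B.Adj u w) :
    Fintype.card V ≤ R.indepNum * B.indepNum := by
  classical
  have h_card (C : R.ConnectedComponent) : #{v | R.connectedComponentMk v = C} ≤ B.indepNum := by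
    refine IsIndepSet.card_le_indepNum ?_
    rw [Finset.coe_filter_univ]
    exact isIndepSet_supp_connectedComponent h C
  calc Fintype.card V = #(Finset.univ : Finset V) := Finset.card_univ.symm
    _ ≤ B.indepNum * #(Finset.univ : Finset R.ConnectedComponent) :=
        Finset.card_le_mul_card_image_of_maps_to (fun _ _ ↦ Finset.mem_univ _) _
          fun C _ ↦ h_card C
    _ ≤ R.indepNum * B.indepNum := by
        rw [mul_comm, Finset.card_univ, ← Nat.card_eq_fintype_card]
        gcongr
        exact card_connectedComponent_le_indepNum R

end Propagation

theorem multiset_triple_eq_iff {α : Type*} {a₁ a₂ a₃ x₁ x₂ x₃ : α} :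
    ({a₁, a₂, a₃} : Multiset α) = {x₁, x₂, x₃} ↔
      a₁ = x₁ ∧ a₂ = x₂ ∧ a₃ = x₃ ∨ a₁ = x₁ ∧ a₂ = x₃ ∧ a₃ = x₂ ∨
      a₁ = x₂ ∧ a₂ = x₁ ∧ a₃ = x₃ ∨ a₁ = x₂ ∧ a₂ = x₃ ∧ a₃ = x₁ ∨
      a₁ = x₃ ∧ a₂ = x₁ ∧ a₃ = x₂ ∨ a₁ = x₃ ∧ a₂ = x₂ ∧ a₃ = x₁ := by
  constructor
  · simp only [Multiset.insert_eq_cons, Multiset.cons_eq_cons, Multiset.singleton_eq_cons_iff]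
    grind [Multiset.singleton_inj, Multiset.cons_zero]
  · grind [Multiset.insert_eq_cons, Multiset.cons_swap, Multiset.pair_comm]

section ColorGraph

open SimpleGraph hiding Coloring

variable {n : ℕ} {c : Coloring n}

/-- The graph formed by the edges that `c` colors `x`; the diagonal values of `c.col` are
discarded. -/
def Coloring.colorGraph (c : Coloring n) (x : Col) : SimpleGraph (Fin n) where
  Adj i j := i ≠ j ∧ c.col i j = x
  symm := ⟨fun i j h ↦ ⟨h.1.symm, c.symm i j ▸ h.2⟩⟩
  loopless := ⟨fun _ h ↦ h.1 rfl⟩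

theorem twoColored_iff_exists_isIndepSet {S : Finset (Fin n)} :
    TwoColored c S ↔ ∃ x, (c.colorGraph x).IsIndepSet S := by
  refine exists_congr fun x ↦ ?_
  simp only [isIndepSet_iff, Set.Pairwise, Finset.mem_coe, Coloring.colorGraph]
  grind

theorem h2_le_iff {m : ℕ} : h2 c ≤ m ↔ ∀ x, (c.colorGraph x).indepNum ≤ m := by
  have h_bdd : BddAbove {k | ∃ S : Finset (Fin n), TwoColored c S ∧ S.card = k} :=
    ⟨n, by rintro _ ⟨S, -, rfl⟩; exact card_finset_fin_le S⟩
  have h_nonempty : {k | ∃ S : Finset (Fin n), TwoColored c S ∧ S.card = k}.Nonempty :=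
    ⟨0, ∅, ⟨.r, by simp⟩, rfl⟩
  rw [h2, csSup_le_iff h_bdd h_nonempty]
  constructor
  · intro h x
    obtain ⟨S, hS⟩ := (c.colorGraph x).exists_isNIndepSet_indepNum
    exact h _ ⟨S, twoColored_iff_exists_isIndepSet.mpr ⟨x, hS.isIndepSet⟩, hS.card_eq⟩
  · rintro h _ ⟨S, hS, rfl⟩
    obtain ⟨x, hx⟩ := twoColored_iff_exists_isIndepSet.mp hS
    exact hx.card_le_indepNum.trans (h x)

theorem contains_iff {x₁ x₂ x₃ : Col} : Contains c {x₁, x₂, x₃} ↔ ∃ u v w,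
    (c.colorGraph x₁).Adj u v ∧ (c.colorGraph x₂).Adj v w ∧ (c.colorGraph x₃).Adj u w := by
  simp only [Contains, triPattern, multiset_triple_eq_iff, Coloring.colorGraph]
  have h_symm := c.symm
  constructor
  · rintro ⟨u, v, w, huv, hvw, huw, h | h | h | h | h | h⟩
    · exact ⟨u, v, w, by grind⟩
    · exact ⟨v, u, w, by grind⟩
    · exact ⟨w, v, u, by grind⟩
    · exact ⟨w, u, v, by grind⟩
    · exact ⟨v, w, u, by grind⟩
    · exact ⟨u, w, v, by grind⟩
  · rintro ⟨u, v, w, huv, hvw, huw⟩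
    exact ⟨u, v, w, by grind⟩

theorem avoids_rrb_rby_iff : Avoids c {Prrb, Prby} ↔ ∀ u v w,
    (c.colorGraph .b).Adj u v → (c.colorGraph .r).Adj v w → (c.colorGraph .b).Adj u w := by
  have h_rrb : Prrb = {Col.b, Col.r, Col.r} := by decide
  have h_rby : Prby = {Col.b, Col.r, Col.y} := by decide
  simp only [Avoids, Set.mem_insert_iff, Set.mem_singleton_iff, forall_eq_or_imp, forall_eq,
    h_rrb, h_rby, contains_iff, Coloring.colorGraph]
  have h_symm := c.symm
  have h_col (i j : Fin n) : c.col i j = .r ∨ c.col i j = .b ∨ c.col i j = .y := by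
    cases c.col i j <;> simp
  grind

theorem le_h2_sq_of_avoids (hc : Avoids c {Prrb, Prby}) : n ≤ h2 c ^ 2 := by
  have h_indep := h2_le_iff.mp (le_refl (h2 c))
  calc n = Fintype.card (Fin n) := (Fintype.card_fin n).symm
    _ ≤ (c.colorGraph .r).indepNum * (c.colorGraph .b).indepNum :=
        card_le_indepNum_mul_indepNum (avoids_rrb_rby_iff.mp hc)
    _ ≤ h2 c ^ 2 := sq (h2 c) ▸ Nat.mul_le_mul (h_indep .r) (h_indep .b)

end ColorGraph

section Minimum

variable {n : ℕ} {H : Set (Multiset Col)}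

theorem h2n_le_h2 {c : Coloring n} (hc : Avoids c H) : h2n n H ≤ h2 c :=
  Nat.sInf_le ⟨c, hc, rfl⟩

theorem exists_avoids_and_h2_eq_h2n (h : ∃ c : Coloring n, Avoids c H) :
    ∃ c : Coloring n, Avoids c H ∧ h2 c = h2n n H :=
  Nat.sInf_mem (s := {m | ∃ c : Coloring n, Avoids c H ∧ h2 c = m})
    (h.elim fun c hc ↦ ⟨h2 c, c, hc, rfl⟩)

end Minimum

section LexicographicColoring

open SimpleGraph hiding Coloring

variable {n : ℕ} {V W : Type*} {G : SimpleGraph V} {H : SimpleGraph W} {φ : Fin n ↪ V × W}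

open scoped Classical in
/-- The coloring of `K_n` whose vertices are placed in `V × W` by `φ`, the rows `{v} × W` being the
blocks: edges between blocks are yellow along `G` and blue otherwise, edges inside a block are
yellow along `H` and red otherwise. -/
noncomputable def lexColoring (G : SimpleGraph V) (H : SimpleGraph W) (φ : Fin n ↪ V × W) :
    Coloring n where
  col i j :=
    if (φ i).1 = (φ j).1 then if H.Adj (φ i).2 (φ j).2 then .y else .r
    else if G.Adj (φ i).1 (φ j).1 then .y else .b
  symm i j := by simp only [eq_comm, adj_comm]

theorem avoids_lexColoring (G : SimpleGraph V) (H : SimpleGraph W) (φ : Fin n ↪ V × W) :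
    Avoids (lexColoring G H φ) {Prrb, Prby} := by
  rw [avoids_rrb_rby_iff]
  intro u v w
  simp only [Coloring.colorGraph, lexColoring]
  grind

theorem compl_colorGraph_lexColoring_r :
    ((lexColoring G H φ).colorGraph .r)ᶜ = (lexProd ⊤ H).comap φ := by
  ext i j
  have h_inj := φ.injective.eq_iff (a := i) (b := j)
  simp only [compl_adj, comap_adj, Coloring.colorGraph, lexColoring, lexProd, top_adj]
  grind [Prod.ext_iff, SimpleGraph.irrefl]

theorem compl_colorGraph_lexColoring_b :
    ((lexColoring G H φ).colorGraph .b)ᶜ = (lexProd G ⊤).comap φ := by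
  ext i j
  have h_inj := φ.injective.eq_iff (a := i) (b := j)
  simp only [compl_adj, comap_adj, Coloring.colorGraph, lexColoring, lexProd, top_adj]
  grind [Prod.ext_iff, SimpleGraph.irrefl]

theorem compl_colorGraph_lexColoring_y :
    ((lexColoring G H φ).colorGraph .y)ᶜ = (lexProd Gᶜ Hᶜ).comap φ := by
  ext i j
  have h_inj := φ.injective.eq_iff (a := i) (b := j)
  simp only [compl_adj, comap_adj, Coloring.colorGraph, lexColoring, lexProd]
  grind [Prod.ext_iff, SimpleGraph.irrefl]

theorem h2_lexColoring_le [Fintype V] [Fintype W] {m : ℕ} (hr : Fintype.card V * H.cliqueNum ≤ m)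
    (hb : G.cliqueNum * Fintype.card W ≤ m) (hy : G.indepNum * H.indepNum ≤ m) :
    h2 (lexColoring G H φ) ≤ m := by
  have h_comap (K : SimpleGraph V) (L : SimpleGraph W) :
      ((lexProd K L).comap φ).cliqueNum ≤ K.cliqueNum * L.cliqueNum :=
    (cliqueNum_comap_le _ φ).trans (cliqueNum_lexProd_le K L)
  refine h2_le_iff.mpr fun x ↦ ?_
  rw [← cliqueNum_compl]
  match x with
  | .r =>
    rw [compl_colorGraph_lexColoring_r]
    exact (h_comap _ _).trans ((Nat.mul_le_mul_right _ cliqueNum_top_le).trans hr)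
  | .b =>
    rw [compl_colorGraph_lexColoring_b]
    exact (h_comap _ _).trans ((Nat.mul_le_mul_left _ cliqueNum_top_le).trans hb)
  | .y =>
    rw [compl_colorGraph_lexColoring_y]
    exact (h_comap _ _).trans (by simpa only [cliqueNum_compl] using hy)

end LexicographicColoring

theorem h2n_le_of_le_sq {n m : ℕ} (hm : 0 < m) (hn : n ≤ m ^ 2) :
    h2n n {Prrb, Prby} ≤ 81 * m := by
  have : NeZero m := ⟨hm.ne'⟩
  obtain ⟨G, hG_clique, hG_indep⟩ := exists_cliqueNum_le_eight_and_indepNum_le (Fin m)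
  obtain ⟨φ⟩ : Nonempty (Fin n ↪ Fin m × Fin m) :=
    Function.Embedding.nonempty_of_card_le (by simpa [sq] using hn)
  have h_indep : G.indepNum * G.indepNum ≤ 81 * m := by
    rw [Fintype.card_fin] at hG_indep
    have : (G.indepNum * G.indepNum : ℝ) ≤ 81 * m :=
      calc (G.indepNum * G.indepNum : ℝ) ≤ (9 * √m) * (9 * √m) := by gcongr
        _ = 81 * m := by rw [mul_mul_mul_comm, Real.mul_self_sqrt (Nat.cast_nonneg m)]; norm_num
    exact_mod_cast this
  have h_h2 : h2 (lexColoring G G φ) ≤ 81 * m := by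
    apply h2_lexColoring_le _ _ h_indep <;> rw [Fintype.card_fin] <;> nlinarith
  exact (h2n_le_h2 (avoids_lexColoring G G φ)).trans h_h2

theorem sqrt_le_h2n (n : ℕ) : √n ≤ h2n n {Prrb, Prby} := by
  have φ : Fin n ↪ Fin 1 × Fin n := (Equiv.uniqueProd (Fin n) (Fin 1)).symm.toEmbedding
  obtain ⟨c, hc, hc_eq⟩ := exists_avoids_and_h2_eq_h2n ⟨_, avoids_lexColoring ⊥ ⊥ φ⟩
  rw [← hc_eq, Real.sqrt_le_left (Nat.cast_nonneg _)]
  exact_mod_cast le_h2_sq_of_avoids hc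

theorem stmt3 :
    (∀ n : ℕ, 0 < n → ⌈Real.sqrt n⌉₊ ≤ h2n n {Prrb, Prby}) ∧
    (∃ C : ℝ, 0 < C ∧ ∃ n0 : ℕ, ∀ n : ℕ, n0 ≤ n →
      (h2n n {Prrb, Prby} : ℝ) ≤ C * Real.sqrt n) := by
  constructor
  · exact fun n _ ↦ Nat.ceil_le.mpr (sqrt_le_h2n n)
  · refine ⟨162, by norm_num, 1, fun n hn ↦ ?_⟩
    have h_one_le : 1 ≤ √(n : ℝ) := by simpa using hn
    have h_sq : n ≤ ⌈√(n : ℝ)⌉₊ ^ 2 := by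
      exact_mod_cast (Real.sqrt_le_left (Nat.cast_nonneg _)).mp (Nat.le_ceil √(n : ℝ))
    calc (h2n n {Prrb, Prby} : ℝ) ≤ (81 * ⌈√(n : ℝ)⌉₊ : ℕ) :=
          Nat.cast_le.mpr (h2n_le_of_le_sq (Nat.ceil_pos.mpr (by positivity)) h_sq)
      _ ≤ 162 * √n := by
          push_cast
          linarith [Nat.ceil_lt_add_one (Real.sqrt_nonneg (n : ℝ))]
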